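/- Let p be a prime and G a p-group (every element of G has order a power of p; G may be infinite). Then G is a cut-group if and only if one of the following holds: (i) p = 2 and for every a ∈ Φ⁺(G), a³ is conjugate in G to a or to a⁻¹; (ii) p = 3 and for every a ∈ Φ⁺(G), a² is conjugate in G to a⁻¹; (iii) Φ⁺(G) = {1}. -/

import Mathlib

/-- A group `G` is a *cut-group* if every central unit of the integral group ring `ℤ[G]`
is trivial, i.e. of the form `±g` for some `g ∈ G`. -/
def IsCutGroup (G : Type*) [Group G] : Prop :=
  ∀ u : (MonoidAlgebra ℤ G)ˣ,
    (u : MonoidAlgebra ℤ G) ∈ Subring.center (MonoidAlgebra ℤ G) →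
    ∃ g : G, (u : MonoidAlgebra ℤ G) = MonoidAlgebra.of ℤ G g ∨
      (u : MonoidAlgebra ℤ G) = -(MonoidAlgebra.of ℤ G g)

/-- `Φ⁺(G)`: the set of torsion elements of `G` having only finitely many conjugates
in `G` (the torsion part of the FC-subgroup of `G`). -/
def FCTorsion (G : Type*) [Group G] : Set G :=
  {g : G | {h : G | IsConj g h}.Finite ∧ IsOfFinOrder g}

/-!
For a torsion group `G`, being a cut-group means that every `a ∈ Φ⁺(G)` is inverse semi-rational:
each generator of `⟨a⟩` is conjugate to `a` or `a⁻¹`.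

Assume this. By Dietzmann's lemma a central unit `u` lives in `ℤ[N]` with `N` finite and normal.
The coefficients of `v = u * u*`, where `*` inverts group elements, depend only on the cyclic
subgroup generated by the element, so the eigenvalues of `v` in the regular representation are
rational, hence units of `ℤ`. As `v` is symmetric, its trace is at most `|N|`, so
`∑ u_g² = v_1 ≤ 1`.

Conversely, let `z` be the sum of the conjugates of `a` and `a⁻¹`. An irrational eigenvalue of `z`
would generate a totally real field with units of infinite order, and some power of such a unit is
realised by a polynomial in `z` that is a nontrivial central unit. So all eigenvalues are integers,
whence `z ^ q = z` modulo every large prime `q`; comparing traces gives `z_(a ^ q) = z_a`, and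
every generator of `⟨a⟩` is such an `a ^ q` by Dirichlet's theorem on primes in arithmetic
progressions.

In a `p`-group, conjugate powers `a ^ i`, `a ^ k` of `a ≠ 1` satisfy `i ≡ k` modulo `p`; applied to
the generator `a ^ 2` for odd `p` this forces `2 ≡ -1`, so `p = 3`. For `p ^ m = 4` and `p ^ m = 3`
the single exponent `p ^ m - 1` suffices, because the units modulo `p ^ n` are `±(p ^ m - 1) ^ i`.
-/

section GroupRing

open MonoidAlgebra HopfAlgebra

variable {R G : Type*} [CommRing R] [Group G]

theorem mem_center_monoidAlgebra_iff {x : R[G]} :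
    x ∈ Subring.center R[G] ↔ ∀ g h : G, x.coeff (g * h * g⁻¹) = x.coeff h := by
  refine ⟨fun hx g h ↦ ?_, fun hx ↦ Subring.mem_center_iff.2 fun y ↦ ?_⟩
  · have hcomm := congrArg (fun y ↦ y.coeff (g * h)) (Subring.mem_center_iff.1 hx (single g 1))
    simpa [mul_assoc] using hcomm.symm
  · induction y using MonoidAlgebra.induction_linear with
    | zero => simp
    | add y₁ y₂ h₁ h₂ => rw [add_mul, mul_add, h₁, h₂]
    | single g r =>
      ext h
      rw [coeff_single_mul_apply, coeff_mul_single_apply, ← hx g (g⁻¹ * h), mul_inv_cancel_left,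
        mul_comm]

theorem coeff_antipode (x : R[G]) (g : G) : (antipode R x).coeff g = x.coeff g⁻¹ := by
  classical
  induction x using MonoidAlgebra.induction_linear with
  | zero => simp
  | add x y hx hy => simp [hx, hy]
  | single h r => simp [Finsupp.single_apply, inv_eq_iff_eq_inv]

theorem antipode_antipode (x : R[G]) : antipode R (antipode R x) = x := by
  ext g; simp [coeff_antipode]

theorem coeff_mul_antipode_one (x : R[G]) :
    (x * antipode R x).coeff 1 = x.coeff.sum fun _ r ↦ r ^ 2 := by
  simp [coeff_mul_apply_left, coeff_antipode, Finsupp.sum, sq]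

theorem mapRingHom_antipode {S : Type*} [CommRing S] (f : R →+* S) (x : R[G]) :
    mapRingHom G f (antipode R x) = antipode S (mapRingHom G f x) := by
  ext g
  simp [coeff_antipode]

section RegularMatrix

variable [Fintype G] [DecidableEq G]

/-- The matrix of left multiplication by `x` on `R[G]` in the basis `G`, i.e. the left regular
representation of a finite group. -/
noncomputable def regularMatrix : R[G] →ₐ[R] Matrix G G R :=
  Algebra.leftMulMatrix (MonoidAlgebra.basis G R)

theorem regularMatrix_apply (x : R[G]) (g h : G) : regularMatrix x g h = x.coeff (g * h⁻¹) := by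
  rw [regularMatrix, Algebra.leftMulMatrix_eq_repr_mul, basis_apply]
  exact (coeff_mul_single_apply x 1 h g).trans (mul_one _)

theorem regularMatrix_injective :
    Function.Injective (regularMatrix : R[G] →ₐ[R] Matrix G G R) :=
  Algebra.leftMulMatrix_injective _

theorem trace_regularMatrix (x : R[G]) : (regularMatrix x).trace = Fintype.card G * x.coeff 1 := by
  simp [Matrix.trace, regularMatrix_apply]

theorem regularMatrix_antipode (x : R[G]) :
    regularMatrix (antipode R x) = (regularMatrix x).transpose := by
  ext g h; simp [regularMatrix_apply, coeff_antipode]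

theorem isHermitian_regularMatrix [Star R] [TrivialStar R] {x : R[G]} (hx : antipode R x = x) :
    (regularMatrix x).IsHermitian := by
  rw [Matrix.IsHermitian, Matrix.conjTranspose_eq_transpose_of_trivial, ← regularMatrix_antipode,
    hx]

theorem regularMatrix_mapRingHom {S : Type*} [CommRing S] (f : R →+* S) (x : R[G]) :
    regularMatrix (mapRingHom G f x) = (regularMatrix x).map f := by
  ext g h; simp [regularMatrix_apply]

end RegularMatrix

end GroupRing

section CyclicSubgroups

variable {G A : Type*} [Group G] [Fintype G] [AddCommGroup A] {K : AddSubgroup A} {χ : G → A}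

open Classical in
theorem sum_generators_mem (hχ : ∀ C : Subgroup G, ∑ g with g ∈ C, χ g ∈ K) (C : Subgroup G) :
    ∑ g with Subgroup.zpowers g = C, χ g ∈ K := by
  induction C using WellFoundedLT.induction with
  | _ C ih =>
  have hsum : ∑ D with D ≤ C, ∑ g with Subgroup.zpowers g = D, χ g = ∑ g with g ∈ C, χ g := by
    rw [← Finset.sum_fiberwise_of_maps_to (s := {g | g ∈ C}) (t := {D | D ≤ C})
      (g := Subgroup.zpowers) (by simp)]
    refine Finset.sum_congr rfl fun D hD ↦ Finset.sum_congr ?_ fun _ _ ↦ rfl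
    ext g
    simp only [Finset.mem_filter, Finset.mem_univ, true_and] at hD ⊢
    exact ⟨fun hg ↦ ⟨Subgroup.zpowers_le.1 (hg.trans_le hD), hg⟩, And.right⟩
  rw [← Finset.add_sum_erase _ _ (a := C) (by simp)] at hsum
  refine (K.add_mem_cancel_right (K.sum_mem fun D hD ↦ ih D ?_)).1 (hsum ▸ hχ C)
  simpa [lt_iff_le_and_ne, and_comm] using hD

open Classical in
theorem sum_zsmul_mem_of_zpowers (hχ : ∀ C : Subgroup G, ∑ g with g ∈ C, χ g ∈ K) {v : G → ℤ}
    (hv : ∀ g h, Subgroup.zpowers g = Subgroup.zpowers h → v g = v h) :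
    ∑ g, v g • χ g ∈ K := by
  rw [← Finset.sum_fiberwise Finset.univ Subgroup.zpowers]
  refine K.sum_mem fun C _ ↦ ?_
  obtain hC | ⟨a, ha⟩ :=
    (Finset.univ.filter fun g ↦ Subgroup.zpowers g = C).eq_empty_or_nonempty
  · simp [hC]
  · rw [Finset.mem_filter_univ] at ha
    rw [Finset.sum_congr rfl fun g hg ↦ by rw [hv g a (by simp_all)], ← Finset.smul_sum]
    exact K.zsmul_mem (sum_generators_mem hχ C) _

end CyclicSubgroups

section Rationality

open MonoidAlgebra

variable {k G E : Type*} [Field k] [CharZero k] [Group G] [AddCommGroup E] [Module k E]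
  [FiniteDimensional k E]

theorem sum_character_mem_range_intCast [Fintype G] (ρ : Representation k G E) :
    ∑ g, ρ.character g ∈ (Int.castAddHom k).range := by
  have hcard : (Nat.card G : k) ≠ 0 := mod_cast Nat.card_pos.ne'
  let _ := invertibleOfNonzero hcard
  refine ⟨Nat.card G * Module.finrank k ρ.invariants, ?_⟩
  have := ρ.card_inv_mul_sum_char_eq_finrank
  rw [inv_mul_eq_iff_eq_mul₀ hcard] at this
  simp [this]

-- Taking traces, `c * dim E = ∑ v_g χ(g)`, which is an integer because the sum of the character
-- `χ` over any subgroup is the order of the subgroup times the dimension of its invariants.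
theorem exists_ratCast_eq_of_forall_smul_eq [Finite G] [Nontrivial E] [Module k[G] E]
    [IsScalarTower k k[G] E] {v : ℤ[G]}
    (hv : ∀ g h, Subgroup.zpowers g = Subgroup.zpowers h → v.coeff g = v.coeff h) {c : k}
    (hc : ∀ x : E, mapRingHom G (Int.castRingHom k) v • x = c • x) :
    ∃ q : ℚ, q = c := by
  classical
  have := Fintype.ofFinite G
  let ρ : Representation k G E := Representation.ofModule' E
  obtain ⟨m, hm⟩ := sum_zsmul_mem_of_zpowers (χ := ρ.character) (fun C ↦ by
    rw [Finset.sum_subtype (p := (· ∈ C)) _ (by simp)]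
    exact sum_character_mem_range_intCast (ρ.comp C.subtype)) hv
  have hρ : ∑ g, (v.coeff g : k) • ρ g = c • LinearMap.id := by
    ext x
    rw [LinearMap.smul_apply, LinearMap.id_apply, ← hc,
      ← sum_coeff_single (mapRingHom G (Int.castRingHom k) v),
      Finsupp.sum_fintype _ _ (by simp), Finset.sum_smul]
    simp [ρ, Representation.ofModule', ← smul_assoc]
  have htrace : m = c * Module.finrank k E := by
    rw [Int.coe_castAddHom] at hm
    simpa [Representation.character, hm] using congrArg (LinearMap.trace k E) hρ
  refine ⟨m / Module.finrank k E, ?_⟩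
  have : (Module.finrank k E : k) ≠ 0 := mod_cast Module.finrank_pos.ne'
  push_cast
  rw [htrace, mul_div_cancel_right₀ _ this]

theorem exists_ratCast_eq_of_isRoot_charpoly [Fintype G] [DecidableEq G] {v : ℤ[G]}
    (hcenter : v ∈ Subring.center ℤ[G])
    (hv : ∀ g h, Subgroup.zpowers g = Subgroup.zpowers h → v.coeff g = v.coeff h) {c : k}
    (hc : ((regularMatrix v).map (Int.castRingHom k)).charpoly.IsRoot c) :
    ∃ q : ℚ, q = c := by
  set w := mapRingHom G (Int.castRingHom k) v with hw
  have hcentral : w ∈ Subring.center k[G] := by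
    rw [mem_center_monoidAlgebra_iff] at hcenter ⊢
    simp [w, hcenter]
  rw [← regularMatrix_mapRingHom, ← hw, regularMatrix, Algebra.leftMulMatrix_apply,
    LinearMap.charpoly_toMatrix, ← Module.End.hasEigenvalue_iff_isRoot_charpoly] at hc
  let E : Submodule k[G] k[G] := {
    carrier := {x | w * x = c • x}
    add_mem' hx hy := by simp_all [mul_add]
    zero_mem' := by simp
    smul_mem' y x hx := by
      rw [Set.mem_ofPred_eq] at hx ⊢
      rw [smul_eq_mul, ← mul_assoc, ← Subring.mem_center_iff.1 hcentral, mul_assoc, hx,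
        mul_smul_comm] }
  have : Nontrivial E := by
    obtain ⟨x, hx⟩ := hc.exists_hasEigenvector
    exact ⟨0, ⟨x, hx.apply_eq_smul⟩, fun h ↦ hx.2 (congrArg Subtype.val h).symm⟩
  exact exists_ratCast_eq_of_forall_smul_eq (E := E) hv fun x ↦ Subtype.ext x.2

end Rationality

section IntegerRoots

open Polynomial

theorem exists_intCast_eq_of_isRoot_map {k : Type*} [Field k] [CharZero k] {p : ℤ[X]}
    (hp : p.Monic) {q : ℚ} (hq : (p.map (Int.castRingHom k)).IsRoot q) :
    ∃ m : ℤ, m = q ∧ p.IsRoot m := by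
  have hroot : aeval q p = 0 := (algebraMap ℚ k).injective <| by
    rw [map_zero, ← aeval_algebraMap_apply, aeval_def, ← eval_map]
    exact hq
  obtain ⟨m, rfl⟩ := isInteger_of_is_root_of_monic hp hroot
  exact ⟨m, by simp, by simpa using (aeval_algebraMap_eq_zero_iff ℚ m p).1 hroot⟩

theorem dvd_det_of_isRoot_charpoly {n R : Type*} [Fintype n] [DecidableEq n] [CommRing R]
    {M : Matrix n n R} {r : R} (hr : M.charpoly.IsRoot r) : r ∣ M.det := by
  have hdvd := sub_dvd_eval_sub r 0 M.charpoly
  rw [hr, sub_zero, zero_sub, dvd_neg, ← coeff_zero_eq_eval_zero] at hdvd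
  rw [Matrix.det_eq_sign_charpoly_coeff]
  exact hdvd.mul_left _

end IntegerRoots

section FiniteGroup

open MonoidAlgebra HopfAlgebra Polynomial

variable {G : Type*} [Group G]

theorem coeff_one_le_one_of_isUnit [Finite G] {v : ℤ[G]} (hunit : IsUnit v)
    (hcenter : v ∈ Subring.center ℤ[G]) (hsymm : antipode ℤ v = v)
    (hv : ∀ g h, Subgroup.zpowers g = Subgroup.zpowers h → v.coeff g = v.coeff h) :
    v.coeff 1 ≤ 1 := by
  classical
  have := Fintype.ofFinite G
  set V := regularMatrix v
  have hV : (V.map (Int.castRingHom ℝ)).IsHermitian := by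
    rw [← regularMatrix_mapRingHom]
    exact isHermitian_regularMatrix (by rw [← mapRingHom_antipode, hsymm])
  have heig : ∀ i, hV.eigenvalues i ≤ 1 := by
    intro i
    have hroot : (V.map (Int.castRingHom ℝ)).charpoly.IsRoot (hV.eigenvalues i) := by
      rw [hV.charpoly_eq, IsRoot, eval_prod]
      exact Finset.prod_eq_zero (Finset.mem_univ i) (by simp)
    obtain ⟨q, hq⟩ := exists_ratCast_eq_of_isRoot_charpoly hcenter hv hroot
    rw [Matrix.charpoly_map, ← hq] at hroot
    obtain ⟨m, rfl, hm⟩ := exists_intCast_eq_of_isRoot_map V.charpoly_monic hroot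
    have hm1 : IsUnit m := isUnit_of_dvd_unit (dvd_det_of_isRoot_charpoly hm)
      ((Matrix.isUnit_iff_isUnit_det V).1 (hunit.map regularMatrix))
    rw [← hq]
    exact_mod_cast (Int.isUnit_iff.1 hm1).elim (·.le) (fun h ↦ by omega)
  have hcard : 0 < (Fintype.card G : ℝ) := Nat.cast_pos.2 Fintype.card_pos
  have htrace : Fintype.card G * (v.coeff 1 : ℝ) ≤ Fintype.card G * 1 := by
    calc Fintype.card G * (v.coeff 1 : ℝ) = (V.map (Int.castRingHom ℝ)).trace := by
          rw [← regularMatrix_mapRingHom, trace_regularMatrix]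
          simp
      _ = ∑ i, hV.eigenvalues i := by simpa using hV.trace_eq_sum_eigenvalues
      _ ≤ ∑ _i : G, 1 := Finset.sum_le_sum fun i _ ↦ heig i
      _ = Fintype.card G * 1 := by simp
  exact_mod_cast le_of_mul_le_mul_left htrace hcard

theorem exists_eq_of_or_eq_neg_of {x : ℤ[G]} (hx : x ≠ 0)
    (h : (x * antipode ℤ x).coeff 1 ≤ 1) : ∃ g, x = of ℤ G g ∨ x = -of ℤ G g := by
  rw [coeff_mul_antipode_one] at h
  have hcard : x.coeff.support.card ≤ 1 := by
    have := Finset.card_nsmul_le_sum x.coeff.support (fun g ↦ x.coeff g ^ 2) 1 fun g hg ↦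
      Int.add_one_le_of_lt (sq_pos_of_ne_zero (Finsupp.mem_support_iff.1 hg))
    simpa using this.trans h
  obtain ⟨g, c, hc⟩ := Finsupp.card_support_le_one'.1 hcard
  obtain rfl : x = single g c := by ext; rw [hc]; rfl
  obtain rfl | rfl | rfl := Int.abs_le_one_iff.1 (by simpa using h : |c| ≤ 1)
  · simp at hx
  · exact ⟨g, .inl rfl⟩
  · exact ⟨g, .inr (by simp)⟩

end FiniteGroup

section Conjugacy

variable {G : Type*} [Group G] {a b c : G}

/-- `a` is conjugate to `b` or to `b⁻¹`. -/
def IsConjUpToInv (a b : G) : Prop :=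
  IsConj a b ∨ IsConj a b⁻¹

theorem isConj_inv (h : IsConj a b) : IsConj a⁻¹ b⁻¹ := by
  obtain ⟨g, rfl⟩ := isConj_iff.1 h
  exact isConj_iff.2 ⟨g, by group⟩

namespace IsConjUpToInv

theorem refl (a : G) : IsConjUpToInv a a := .inl (.refl a)

theorem inv_right (h : IsConjUpToInv a b) : IsConjUpToInv a b⁻¹ :=
  h.symm.imp_right fun h ↦ by rwa [inv_inv]

theorem symm (h : IsConjUpToInv a b) : IsConjUpToInv b a :=
  h.imp IsConj.symm fun h ↦ by simpa using isConj_inv h.symm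

theorem trans (hab : IsConjUpToInv a b) (hbc : IsConjUpToInv b c) : IsConjUpToInv a c := by
  obtain hab | hab := hab
  · exact hbc.imp hab.trans hab.trans
  · obtain hbc | hbc := hbc
    · exact .inr (hab.trans (isConj_inv hbc))
    · exact .inl (hab.trans (by simpa only [inv_inv] using isConj_inv hbc))

end IsConjUpToInv

/-- `a` is *inverse semi-rational*: every generator of `⟨a⟩` is conjugate to `a` or to `a⁻¹`. -/
def IsInverseSemirational (a : G) : Prop :=
  ∀ b, Subgroup.zpowers b = Subgroup.zpowers a → IsConjUpToInv b a

theorem pow_mem_FCTorsion (ha : a ∈ FCTorsion G) (n : ℕ) : a ^ n ∈ FCTorsion G := by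
  refine ⟨(ha.1.image (· ^ n)).subset fun b hb ↦ ?_, ha.2.pow⟩
  obtain ⟨g, rfl⟩ := isConj_iff.1 hb
  exact ⟨g * a * g⁻¹, isConj_iff.2 ⟨g, rfl⟩, conj_pow⟩

theorem coe_mem_FCTorsion (N : Subgroup G) [N.Normal] [Finite N] (n : N) :
    (n : G) ∈ FCTorsion G := by
  refine ⟨(Set.toFinite (N : Set G)).subset fun h hh ↦ ?_,
    N.subtype.isOfFinOrder (isOfFinOrder_of_finite n)⟩
  obtain ⟨g, rfl⟩ := isConj_iff.1 hh
  exact Subgroup.Normal.conj_mem inferInstance _ n.2 g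

end Conjugacy

section Dietzmann

variable {G : Type*} [Group G]

theorem finiteIndex_centralizer_of_finite_isConj {g : G} (hg : {h | IsConj g h}.Finite) :
    (Subgroup.centralizer {g}).FiniteIndex := by
  have horbit : (MulAction.orbit (ConjAct G) g).Finite :=
    hg.subset fun h hh ↦ (ConjAct.mem_orbit_conjAct.1 hh).symm
  have hindex : (Subgroup.centralizer {g}).index = (MulAction.orbit (ConjAct G) g).ncard := by
    rw [Subgroup.centralizer_eq_comap_stabilizer, ← MulAction.index_stabilizer]
    exact Subgroup.index_comap_of_surjective _ ConjAct.toConjAct.surjective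
  exact ⟨hindex ▸ ((Set.ncard_pos horbit).2 (MulAction.nonempty_orbit g)).ne'⟩

open scoped IsMulCommutative in
theorem finite_of_closure_eq_top (hG : IsMulTorsion G) {S : Set G} (hS : S.Finite)
    (hconj : ∀ s ∈ S, {h | IsConj s h}.Finite) (htop : Subgroup.closure S = ⊤) : Finite G := by
  have := hS.to_subtype
  have hcenter : (Subgroup.center G).FiniteIndex := by
    rw [Subgroup.center_eq_infi' htop]
    exact Subgroup.finiteIndex_iInf fun s ↦
      finiteIndex_centralizer_of_finite_isConj (hconj s s.2)
  have : Group.FG G := Group.fg_iff.2 ⟨S, htop, hS⟩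
  have : Finite (Subgroup.center G) :=
    CommGroup.finite_of_fg_isMulTorsion _ (hG.subgroup _)
  have := Subgroup.finite_quotient_of_finiteIndex (H := Subgroup.center G)
  exact Finite.of_subgroup_quotient (Subgroup.center G)

theorem finite_normalClosure (hG : IsMulTorsion G) {S : Set G} (hS : S.Finite)
    (hconj : ∀ s ∈ S, {h | IsConj s h}.Finite) : Finite (Subgroup.normalClosure S) := by
  have hfin : (Group.conjugatesOfSet S).Finite := hS.biUnion hconj
  refine finite_of_closure_eq_top (hG.subgroup _)
    (S := Subtype.val ⁻¹' Group.conjugatesOfSet S) (hfin.preimage Subtype.val_injective.injOn)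
    (fun s hs ↦ ?_) Subgroup.closure_closure_coe_preimage
  obtain ⟨t, ht, hts⟩ := Group.mem_conjugatesOfSet_iff.1 hs
  refine ((hconj t ht).preimage Subtype.val_injective.injOn).subset fun h hh ↦ hts.trans ?_
  exact (Subgroup.normalClosure S).subtype.map_isConj hh

end Dietzmann

section Support

open MonoidAlgebra HopfAlgebra

variable {R G : Type*} [CommRing R] [Group G]

theorem isUnit_antipode {x : R[G]} (hx : IsUnit x) : IsUnit (antipode R x) := by
  obtain ⟨y, hxy, hyx⟩ := isUnit_iff_exists.1 hx
  exact isUnit_iff_exists.2 ⟨antipode R y, by simp [← antipode_mul_antidistrib, hyx],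
    by simp [← antipode_mul_antidistrib, hxy]⟩

theorem mem_center_antipode {x : R[G]} (hx : x ∈ Subring.center R[G]) :
    antipode R x ∈ Subring.center R[G] := by
  rw [mem_center_monoidAlgebra_iff] at hx ⊢
  intro g h
  simp [coeff_antipode, ← hx g h⁻¹, mul_assoc]

theorem mapDomainRingHom_antipode {H : Type*} [Group H] (f : G →* H) (x : R[G]) :
    mapDomainRingHom R f (antipode R x) = antipode R (mapDomainRingHom R f x) := by
  induction x using MonoidAlgebra.induction_linear with
  | zero => simp
  | add x y hx hy => simp only [map_add, hx, hy]
  | single g r => simp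

theorem exists_mapDomainRingHom_subtype_eq {N : Subgroup G} {x : R[G]}
    (hx : (x.coeff.support : Set G) ⊆ N) : ∃ y : R[N], mapDomainRingHom R N.subtype y = x :=
  ⟨_, mapDomain_comapDomain (by simpa using hx) N.subtype_injective⟩

theorem mapDomainRingHom_subtype_injective (N : Subgroup G) :
    Function.Injective (mapDomainRingHom R N.subtype) :=
  mapDomain_injective N.subtype_injective

theorem coeff_mapDomainRingHom_subtype {N : Subgroup G} (x : R[N]) (n : N) :
    (mapDomainRingHom R N.subtype x).coeff n = x.coeff n :=
  Finsupp.mapDomain_apply N.subtype_injective x.coeff n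

theorem finite_isConj_of_mem_support {x : R[G]} (hx : x ∈ Subring.center R[G]) {a : G}
    (ha : a ∈ x.coeff.support) : {b | IsConj a b}.Finite := by
  refine x.coeff.support.finite_toSet.subset fun b hb ↦ ?_
  obtain ⟨g, rfl⟩ := isConj_iff.1 hb
  simpa [mem_center_monoidAlgebra_iff.1 hx] using ha

theorem coeff_eq_of_isConjUpToInv {x : R[G]} (hx : x ∈ Subring.center R[G])
    (hsymm : antipode R x = x) {a b : G} (h : IsConjUpToInv a b) : x.coeff a = x.coeff b := by
  obtain h | h := h
  · obtain ⟨g, rfl⟩ := isConj_iff.1 h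
    rw [mem_center_monoidAlgebra_iff.1 hx]
  · obtain ⟨g, hg⟩ := isConj_iff.1 h
    rw [← mem_center_monoidAlgebra_iff.1 hx g, hg, ← coeff_antipode, hsymm]

end Support

section InverseSemirational

open MonoidAlgebra HopfAlgebra

variable {G : Type*} [Group G]

theorem exists_eq_of_or_eq_neg_of_of_isInverseSemirational {N : Subgroup G} [N.Normal] [Finite N]
    (hN : ∀ n : N, IsInverseSemirational (n : G)) {x : ℤ[N]} (hunit : IsUnit x)
    (hx : mapDomainRingHom ℤ N.subtype x ∈ Subring.center ℤ[G]) :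
    ∃ n, x = of ℤ N n ∨ x = -of ℤ N n := by
  set ι := mapDomainRingHom ℤ N.subtype
  set v := x * antipode ℤ x with hv
  have hsymm : antipode ℤ v = v := by
    rw [hv, antipode_mul_antidistrib, antipode_antipode]
  have hcenter : ι v ∈ Subring.center ℤ[G] := by
    rw [map_mul, mapDomainRingHom_antipode]
    exact mul_mem hx (mem_center_antipode hx)
  have hconj (g h : N) (hgh : IsConjUpToInv (g : G) h) : v.coeff g = v.coeff h := by
    rw [← coeff_mapDomainRingHom_subtype, ← coeff_mapDomainRingHom_subtype]
    exact coeff_eq_of_isConjUpToInv hcenter (by rw [← mapDomainRingHom_antipode, hsymm]) hgh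
  refine exists_eq_of_or_eq_neg_of hunit.ne_zero <|
    coeff_one_le_one_of_isUnit (hunit.mul (isUnit_antipode hunit)) ?_ hsymm fun g h hgh ↦ ?_
  · exact mem_center_monoidAlgebra_iff.2 fun g h ↦
      hconj _ _ (.inl (N.subtype.map_isConj (isConj_iff.2 ⟨g, rfl⟩)).symm)
  · refine hconj g h (hN h g ?_)
    simpa [MonoidHom.map_zpowers] using congrArg (Subgroup.map N.subtype) hgh

theorem isCutGroup_of_isInverseSemirational (hG : IsMulTorsion G)
    (h : ∀ a ∈ FCTorsion G, IsInverseSemirational a) : IsCutGroup G := by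
  intro u hu
  have hu' : (↑u⁻¹ : ℤ[G]) ∈ Subring.center ℤ[G] := Set.units_inv_mem_center hu
  let S : Set G := u.val.coeff.support ∪ u⁻¹.val.coeff.support
  let N := Subgroup.normalClosure S
  have : Finite N := finite_normalClosure hG
    (u.val.coeff.support.finite_toSet.union u⁻¹.val.coeff.support.finite_toSet) fun s hs ↦
      hs.elim (finite_isConj_of_mem_support hu) (finite_isConj_of_mem_support hu')
  have hS : S ⊆ N := Subgroup.subset_normalClosure
  obtain ⟨x, hx⟩ := exists_mapDomainRingHom_subtype_eq (Set.subset_union_left.trans hS)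
  obtain ⟨y, hy⟩ := exists_mapDomainRingHom_subtype_eq (Set.subset_union_right.trans hS)
  have hunit : IsUnit x := isUnit_iff_exists.2 ⟨y,
    mapDomainRingHom_subtype_injective N (by rw [map_mul, hx, hy, Units.mul_inv, map_one]),
    mapDomainRingHom_subtype_injective N (by rw [map_mul, hx, hy, Units.inv_mul, map_one])⟩
  obtain ⟨n, hn⟩ := exists_eq_of_or_eq_neg_of_of_isInverseSemirational
    (fun n ↦ h n (coe_mem_FCTorsion N n)) hunit (hx ▸ hu)
  refine ⟨n, ?_⟩
  rw [← hx]
  exact hn.imp (fun h ↦ by simp [h]) fun h ↦ by rw [h, map_neg]; simp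

end InverseSemirational

section Units

open NumberField

theorem exists_unit_not_isOfFinOrder (K : Type*) [Field K] [NumberField K] [IsTotallyReal K]
    (h : 2 ≤ Module.finrank ℚ K) : ∃ ε : (𝓞 K)ˣ, ¬IsOfFinOrder ε := by
  by_contra! htors
  have hrank : Module.finrank ℤ (Additive (𝓞 K)ˣ) = 0 := by
    refine Module.finrank_eq_zero_iff.2 fun ε ↦ ?_
    obtain ⟨r, hr, hε⟩ := isOfFinOrder_iff_pow_eq_one.1 (htors ε.toMul)
    exact ⟨r, mod_cast hr.ne', (natCast_zsmul ε r).trans hε⟩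
  rw [Units.finrank_eq, Units.rank, InfinitePlace.card_eq_nrRealPlaces_add_nrComplexPlaces,
    IsTotallyReal.nrComplexPlaces_eq_zero, ← IsTotallyReal.finrank] at hrank
  omega

theorem exists_pow_sub_one_mem {R : Type*} [CommRing R] (I : Ideal R) [Finite (R ⧸ I)] (ε : Rˣ) :
    ∃ t > 0, ((ε ^ t : Rˣ) : R) - 1 ∈ I := by
  obtain ⟨t, ht, h⟩ := (isOfFinOrder_of_finite
    (Units.map (Ideal.Quotient.mk I : R →* R ⧸ I) ε)).exists_pow_eq_one
  refine ⟨t, ht, Ideal.Quotient.eq.1 ?_⟩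
  rw [← map_pow] at h
  simpa using congrArg Units.val h

theorem exists_unit_dvd_sub_one (K : Type*) [Field K] [NumberField K] [IsTotallyReal K]
    (h : 2 ≤ Module.finrank ℚ K) {d : ℤ} (hd : d ≠ 0) :
    ∃ ε : (𝓞 K)ˣ, ¬IsOfFinOrder ε ∧ (d : 𝓞 K) ∣ ε - 1 := by
  obtain ⟨ε, hε⟩ := exists_unit_not_isOfFinOrder K h
  have : Finite (𝓞 K ⧸ Ideal.span {(d : 𝓞 K)}) :=
    Ideal.finiteQuotientOfFreeOfNeBot _ (by simpa [Ideal.span_singleton_eq_bot] using hd)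
  obtain ⟨t, ht, hεt⟩ := exists_pow_sub_one_mem (Ideal.span {(d : 𝓞 K)}) ε
  exact ⟨ε ^ t, fun h ↦ hε (h.of_pow ht.ne'), Ideal.mem_span_singleton.1 hεt⟩

end Units

section CommonDenominator

open Polynomial

theorem exists_forall_smul_mem_of_fg {R M : Type*} [CommRing R] [IsDomain R] [AddCommGroup M]
    [Module R M] {N L : Submodule R M} (hN : N.FG) (h : ∀ x ∈ N, ∃ d : R, d ≠ 0 ∧ d • x ∈ L) :
    ∃ d : R, d ≠ 0 ∧ ∀ x ∈ N, d • x ∈ L := by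
  induction N, hN using Submodule.fg_induction with
  | singleton x =>
    obtain ⟨d, hd, hx⟩ := h x (Submodule.mem_span_singleton_self x)
    refine ⟨d, hd, fun y hy ↦ ?_⟩
    obtain ⟨r, rfl⟩ := Submodule.mem_span_singleton.1 hy
    exact smul_comm r d x ▸ L.smul_mem r hx
  | sup N₁ N₂ _ _ ih₁ ih₂ =>
    obtain ⟨d₁, hd₁, h₁⟩ := ih₁ fun x hx ↦ h x (Submodule.mem_sup_left hx)
    obtain ⟨d₂, hd₂, h₂⟩ := ih₂ fun x hx ↦ h x (Submodule.mem_sup_right hx)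
    refine ⟨d₁ * d₂, mul_ne_zero hd₁ hd₂, fun x hx ↦ ?_⟩
    obtain ⟨x₁, hx₁, x₂, hx₂, rfl⟩ := Submodule.mem_sup.1 hx
    rw [smul_add, mul_smul d₁ d₂ x₂, mul_smul, smul_comm]
    exact L.add_mem (L.smul_mem d₂ (h₁ x₁ hx₁)) (L.smul_mem d₁ (h₂ x₂ hx₂))

variable {f g : ℚ[X]}

theorem exists_dvd_and_mk_eq (hfg : IsCoprime f g) (x : AdjoinRoot f) :
    ∃ Q : ℚ[X], g ∣ Q ∧ AdjoinRoot.mk f Q = x := by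
  obtain ⟨Q, rfl⟩ := AdjoinRoot.mk_surjective x
  obtain ⟨a, b, hab⟩ := hfg
  refine ⟨b * g * Q, ⟨b * Q, by ring⟩, AdjoinRoot.mk_eq_mk.2 ⟨-a * Q, ?_⟩⟩
  linear_combination Q * hab

theorem exists_forall_mk_map_eq_zsmul (hfg : IsCoprime f g) {N : Submodule ℤ (AdjoinRoot f)}
    (hN : N.FG) : ∃ d : ℤ, d ≠ 0 ∧ ∀ x ∈ N, ∃ P : ℤ[X], g ∣ P.map (Int.castRingHom ℚ) ∧
      AdjoinRoot.mk f (P.map (Int.castRingHom ℚ)) = d • x := by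
  let ι := mapRingHom (Int.castRingHom ℚ)
  let L : Submodule ℤ (AdjoinRoot f) := (((Ideal.span {g}).comap ι).toAddSubgroup.map
    ((AdjoinRoot.mk f).comp ι).toAddMonoidHom).toIntSubmodule
  have hL {x} : x ∈ L ↔ ∃ P : ℤ[X], g ∣ ι P ∧ AdjoinRoot.mk f (ι P) = x :=
    exists_congr fun P ↦ and_congr_left' Ideal.mem_span_singleton
  obtain ⟨d, hd, hdN⟩ := exists_forall_smul_mem_of_fg (L := L) hN fun x _ ↦ by
    obtain ⟨Q, hQ, rfl⟩ := exists_dvd_and_mk_eq hfg x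
    obtain ⟨d, hd, (hdQ : ι _ = _)⟩ :=
      IsLocalization.integerNormalization_spec (nonZeroDivisors ℤ) Q
    exact ⟨d, nonZeroDivisors.ne_zero hd, hL.2 ⟨_, hdQ ▸ dvd_smul_of_dvd d hQ,
      (congrArg _ hdQ).trans (map_zsmul _ d Q)⟩⟩
  exact ⟨d, hd, fun x hx ↦ hL.1 (hdN x hx)⟩

end CommonDenominator

section TotallyRealFactor

open Polynomial NumberField

theorem isTotallyReal_adjoinRoot {f : ℚ[X]} [Fact (Irreducible f)]
    (hf : (f.map (algebraMap ℚ ℝ)).Splits) : IsTotallyReal (AdjoinRoot f) where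
  isReal v := by
    rw [InfinitePlace.isReal_iff, ComplexEmbedding.isReal_iff]
    have hroot : ((f.map (algebraMap ℚ ℝ)).map (algebraMap ℝ ℂ)).IsRoot
        (v.embedding (AdjoinRoot.root f)) := by
      have := (AdjoinRoot.isRoot_root f).map (f := v.embedding)
      rw [map_map] at this ⊢
      rwa [Subsingleton.elim ((algebraMap ℝ ℂ).comp _) (v.embedding.comp (AdjoinRoot.of f))]
    obtain ⟨r, hr⟩ := hf.mem_range_of_isRoot
      (map_ne_zero (Fact.out : Irreducible f).ne_zero) hroot
    refine AdjoinRoot.ringHom_ext (Subsingleton.elim _ _) ?_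
    rw [ComplexEmbedding.conjugate_coe_eq, ← hr]
    exact Complex.conj_ofReal r

theorem exists_factor_of_not_splits {m : ℚ[X]} (hsq : Squarefree m)
    (hreal : (m.map (algebraMap ℚ ℝ)).Splits) (hm : ¬m.Splits) :
    ∃ f g : ℚ[X], m = f * g ∧ IsCoprime f g ∧ Irreducible f ∧ 2 ≤ f.natDegree := by
  obtain ⟨r, hr, hrat⟩ : ∃ r ∈ (m.map (algebraMap ℚ ℝ)).roots, r ∉ (algebraMap ℚ ℝ).range := by
    by_contra! h
    exact hm (hreal.of_splits_map _ h)
  have hroot : aeval r m = 0 := by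
    rw [aeval_def, ← eval_map]
    exact (mem_roots'.1 hr).2
  have hint : IsIntegral ℚ r := IsAlgebraic.isIntegral ⟨m, hsq.ne_zero, hroot⟩
  obtain ⟨g, rfl⟩ := minpoly.dvd ℚ r hroot
  exact ⟨_, g, rfl, (squarefree_mul_iff.1 hsq).1.isCoprime, minpoly.irreducible hint,
    (minpoly.two_le_natDegree_iff hint).2 hrat⟩

theorem exists_forall_lift_of_dvd_sub_one {f g : ℚ[X]} (hfg : IsCoprime f g)
    [Fact (Irreducible f)] [NumberField (AdjoinRoot f)] :
    ∃ d : ℤ, d ≠ 0 ∧ ∀ u : 𝓞 (AdjoinRoot f), (d : 𝓞 (AdjoinRoot f)) ∣ u - 1 →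
      ∃ P : ℤ[X], g ∣ P.map (Int.castRingHom ℚ) - 1 ∧
        AdjoinRoot.mk f (P.map (Int.castRingHom ℚ)) = u := by
  obtain ⟨d, hd, hP⟩ := exists_forall_mk_map_eq_zsmul hfg
    (N := (integralClosure ℤ (AdjoinRoot f)).toSubmodule)
    (Module.Finite.iff_fg.1 (inferInstanceAs (Module.Finite ℤ (𝓞 (AdjoinRoot f)))))
  refine ⟨d, hd, fun u ⟨κ, hκ⟩ ↦ ?_⟩
  obtain ⟨P, hgP, hfP⟩ := hP κ κ.2
  refine ⟨P + 1, by simpa using hgP, ?_⟩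
  rw [Polynomial.map_add, map_add, hfP, ← sub_add_cancel u 1, hκ]
  simp

theorem exists_int_polynomial_unit {f g : ℚ[X]} (hfg : IsCoprime f g) (hirr : Irreducible f)
    (hdeg : 2 ≤ f.natDegree) (hreal : (f.map (algebraMap ℚ ℝ)).Splits) :
    ∃ P P' : ℤ[X], f * g ∣ (P * P' - 1).map (Int.castRingHom ℚ) ∧
      ∀ r > 0, ¬f ∣ (P ^ r - 1).map (Int.castRingHom ℚ) := by
  have : Fact (Irreducible f) := ⟨hirr⟩
  have := isTotallyReal_adjoinRoot hreal
  have : FiniteDimensional ℚ (AdjoinRoot f) := (AdjoinRoot.powerBasis hirr.ne_zero).finite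
  have : NumberField (AdjoinRoot f) := { }
  obtain ⟨d, hd, hlift⟩ := exists_forall_lift_of_dvd_sub_one hfg
  obtain ⟨ε, hε, hdε⟩ := exists_unit_dvd_sub_one (AdjoinRoot f)
    (by rwa [(AdjoinRoot.powerBasis hirr.ne_zero).finrank]) hd
  obtain ⟨P, hgP, hfP⟩ := hlift ε hdε
  obtain ⟨P', hgP', hfP'⟩ := hlift (ε⁻¹ : (𝓞 (AdjoinRoot f))ˣ) <| by
    rw [← dvd_neg, neg_sub]
    simpa [mul_sub] using hdε.mul_left (ε⁻¹ : (𝓞 (AdjoinRoot f))ˣ)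
  refine ⟨P, P', hfg.mul_dvd ?_ ?_, fun r hr hdvd ↦ hε (isOfFinOrder_iff_pow_eq_one.2 ⟨r, hr, ?_⟩)⟩
  · rw [← AdjoinRoot.mk_eq_zero, Polynomial.map_sub, Polynomial.map_mul, map_sub, map_mul, hfP,
      hfP', ← map_mul, ← Units.val_mul]
    simp
  · rw [Polynomial.map_sub, Polynomial.map_mul, Polynomial.map_one, ← sub_add_sub_cancel _
      (P'.map (Int.castRingHom ℚ)), ← sub_one_mul]
    exact (hgP.mul_right _).add hgP'
  · rw [← AdjoinRoot.mk_eq_zero, Polynomial.map_sub, Polynomial.map_pow, map_sub, map_pow, hfP,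
      sub_eq_zero] at hdvd
    ext
    simpa using hdvd

theorem exists_int_polynomial_unit_of_not_splits {m : ℚ[X]} (hsq : Squarefree m)
    (hreal : (m.map (algebraMap ℚ ℝ)).Splits) (hm : ¬m.Splits) :
    ∃ P P' : ℤ[X], m ∣ (P * P' - 1).map (Int.castRingHom ℚ) ∧
      ∀ r > 0, ¬m ∣ (P ^ r - 1).map (Int.castRingHom ℚ) := by
  obtain ⟨f, g, rfl, hfg, hirr, hdeg⟩ := exists_factor_of_not_splits hsq hreal hm
  obtain ⟨P, P', hmul, hpow⟩ := exists_int_polynomial_unit hfg hirr hdeg <|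
    hreal.of_dvd (Polynomial.map_ne_zero hsq.ne_zero)
      (Polynomial.map_dvd _ (dvd_mul_right f g))
  exact ⟨P, P', hmul, fun r hr h ↦ hpow r hr ((dvd_mul_right f g).trans h)⟩

end TotallyRealFactor

section MinimalPolynomial

open MonoidAlgebra HopfAlgebra Polynomial

theorem squarefree_minpoly_of_forall_aeval_sq {K A : Type*} [Field K] [Ring A] [Algebra K A]
    {x : A} (hx : IsIntegral K x) (h : ∀ P : K[X], aeval x P ^ 2 = 0 → aeval x P = 0) :
    Squarefree (minpoly K x) := by
  rintro d ⟨e, he⟩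
  have hde : aeval x (d * e) = 0 := h _ <| by
    rw [← map_pow, show (d * e) ^ 2 = minpoly K x * e by rw [he]; ring, map_mul, minpoly.aeval,
      zero_mul]
  have hdvd := minpoly.dvd K x hde
  have hne : d * e ≠ 0 := fun h0 ↦ minpoly.ne_zero hx (by rw [he, mul_assoc, h0, mul_zero])
  rw [he, mul_assoc] at hdvd
  exact isUnit_iff_dvd_one.2 ((mul_dvd_mul_iff_right hne).1 (by rwa [one_mul]))

variable {N : Type*} [Group N]

theorem antipode_aeval {R : Type*} [CommRing R] {x : R[N]} (hx : antipode R x = x) (P : R[X]) :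
    antipode R (aeval x P) = aeval x P := by
  induction P using Polynomial.induction_on' with
  | add P Q hP hQ => simp only [map_add, hP, hQ]
  | monomial n r =>
    rw [aeval_monomial, ← Algebra.smul_def, map_smul]
    congr 1
    induction n with
    | zero => simp
    | succ n ih => rw [pow_succ, antipode_mul_antidistrib, ih, hx, ← pow_succ', pow_succ]

theorem eq_zero_of_sq_eq_zero {R : Type*} [CommRing R] [LinearOrder R] [IsStrictOrderedRing R]
    {x : R[N]} (hsymm : antipode R x = x) (hx : x ^ 2 = 0) : x = 0 := by
  have h : x.coeff.sum (fun _ r ↦ r ^ 2) = 0 := by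
    rw [← coeff_mul_antipode_one, hsymm, ← sq, hx, MonoidAlgebra.coeff_zero, Finsupp.zero_apply]
  rw [Finsupp.sum, Finset.sum_eq_zero_iff_of_nonneg fun _ _ ↦ sq_nonneg _] at h
  ext g
  by_contra hg
  exact hg (pow_eq_zero_iff two_ne_zero |>.1 (h g (Finsupp.mem_support_iff.2 hg)))

theorem mapRingHom_aeval {R S : Type*} [CommRing R] [CommRing S] (f : R →+* S) (x : R[N])
    (P : R[X]) : MonoidAlgebra.mapRingHom N f (aeval x P) =
      aeval (MonoidAlgebra.mapRingHom N f x) (P.map f) :=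
  map_aeval_eq_aeval_map (by ext; simp) P x

theorem squarefree_minpoly_of_antipode_eq [Finite N] {x : ℚ[N]} (hx : antipode ℚ x = x) :
    Squarefree (minpoly ℚ x) :=
  squarefree_minpoly_of_forall_aeval_sq (Algebra.IsIntegral.isIntegral x) fun P hP ↦
    eq_zero_of_sq_eq_zero (antipode_aeval hx P) hP

theorem minpoly_dvd_map_charpoly [Fintype N] [DecidableEq N] (z : ℤ[N]) :
    minpoly ℚ (MonoidAlgebra.mapRingHom N (Int.castRingHom ℚ) z) ∣
      (regularMatrix z).charpoly.map (Int.castRingHom ℚ) := by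
  rw [← minpoly.algHom_eq regularMatrix regularMatrix_injective, regularMatrix_mapRingHom,
    ← Matrix.charpoly_map]
  exact Matrix.minpoly_dvd_charpoly _

theorem splits_map_minpoly_of_antipode_eq [Finite N] {z : ℤ[N]} (hz : antipode ℤ z = z) :
    ((minpoly ℚ (MonoidAlgebra.mapRingHom N (Int.castRingHom ℚ) z)).map
      (algebraMap ℚ ℝ)).Splits := by
  classical
  have := Fintype.ofFinite N
  have hherm : ((regularMatrix z).map (Int.castRingHom ℝ)).IsHermitian := by
    rw [← regularMatrix_mapRingHom]
    exact isHermitian_regularMatrix (by rw [← mapRingHom_antipode, hz])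
  refine hherm.splits_charpoly.of_dvd (Matrix.charpoly_monic _).ne_zero ?_
  rw [Matrix.charpoly_map, show Int.castRingHom ℝ = (algebraMap ℚ ℝ).comp (Int.castRingHom ℚ) from
    Subsingleton.elim _ _, ← Polynomial.map_map]
  exact Polynomial.map_dvd _ (minpoly_dvd_map_charpoly z)

theorem minpoly_dvd_map_iff {z : ℤ[N]} {P : ℤ[X]} :
    minpoly ℚ (MonoidAlgebra.mapRingHom N (Int.castRingHom ℚ) z) ∣ P.map (Int.castRingHom ℚ) ↔
      aeval z P = 0 := by
  rw [minpoly.dvd_iff, ← mapRingHom_aeval]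
  exact map_eq_zero_iff (MonoidAlgebra.mapRingHom N (Int.castRingHom ℚ))
    (MonoidAlgebra.map_injective (Int.castRingHom ℚ).toAddMonoidHom Int.cast_injective)

theorem exists_eq_map_prod_X_sub_C {m : ℚ[X]} (hmonic : m.Monic) (hsq : Squarefree m)
    (hm : m.Splits) {P : ℤ[X]} (hP : P.Monic) (hmP : m ∣ P.map (Int.castRingHom ℚ)) :
    ∃ s : Finset ℤ, m = (∏ l ∈ s, (X - C l) : ℤ[X]).map (Int.castRingHom ℚ) := by
  classical
  obtain ⟨s, -, hs⟩ : ∃ s : Finset ℤ, (s : Set ℤ) ⊆ .univ ∧ s.image Int.cast = m.roots.toFinset :=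
    Finset.subset_set_image_iff.1 fun r hr ↦ by
      obtain ⟨l, hl, -⟩ := exists_intCast_eq_of_isRoot_map (k := ℚ) (q := r) hP
        ((mem_roots'.1 (Multiset.mem_toFinset.1 hr)).2.dvd hmP)
      exact ⟨l, trivial, hl⟩
  refine ⟨s, ?_⟩
  have hnodup : m.roots.Nodup := nodup_roots (PerfectField.separable_iff_squarefree.2 hsq)
  calc m = (m.roots.map fun r ↦ X - C r).prod := hm.eq_prod_roots_of_monic hmonic
    _ = ∏ r ∈ s.image Int.cast, (X - C r) := by
        rw [hs, Finset.prod, Multiset.toFinset_val, hnodup.dedup]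
    _ = (∏ l ∈ s, (X - C l) : ℤ[X]).map (Int.castRingHom ℚ) := by
        simp [Finset.prod_image Int.cast_injective.injOn, Polynomial.map_prod]

theorem exists_aeval_prod_X_sub_C_eq_zero [Finite N] {z : ℤ[N]} (hz : antipode ℤ z = z)
    (hsplits : (minpoly ℚ (MonoidAlgebra.mapRingHom N (Int.castRingHom ℚ) z)).Splits) :
    ∃ s : Finset ℤ, aeval z (∏ l ∈ s, (X - C l)) = 0 := by
  classical
  have := Fintype.ofFinite N
  obtain ⟨s, hs⟩ := exists_eq_map_prod_X_sub_C (minpoly.monic (Algebra.IsIntegral.isIntegral _))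
    (squarefree_minpoly_of_antipode_eq (by rw [← mapRingHom_antipode, hz])) hsplits
    (Matrix.charpoly_monic _) (minpoly_dvd_map_charpoly z)
  exact ⟨s, minpoly_dvd_map_iff.1 hs.dvd⟩

end MinimalPolynomial

section Frobenius

open MonoidAlgebra Polynomial

variable {q : ℕ} [Fact q.Prime]

theorem pow_char_eq_self_of_aeval_prod_eq_zero {A : Type*} [Ring A] [Algebra (ZMod q) A] {y : A}
    {s : Finset (ZMod q)} (h : aeval y (∏ l ∈ s, (X - C l)) = 0) : y ^ q = y := by
  obtain ⟨Q, hQ⟩ : ∏ l ∈ s, (X - C l) ∣ (X ^ q - X : (ZMod q)[X]) :=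
    Finset.prod_dvd_of_coprime (fun l _ k _ hlk ↦ isCoprime_X_sub_C_of_isUnit_sub
      (sub_ne_zero.2 hlk).isUnit) fun l _ ↦ dvd_iff_isRoot.2 (by simp [ZMod.pow_card])
  have := congrArg (aeval y) hQ
  rwa [map_mul, h, zero_mul, map_sub, map_pow, aeval_X, sub_eq_zero] at this

-- The traces of `y * a⁻¹` and of its `q`-th power `y * a⁻¹ ^ q` agree over `ZMod q`; up to the
-- factor `|N|` they are the coefficients of `y` at `a` and at `a ^ q`.
theorem coeff_pow_char_eq {N : Type*} [Group N] [Finite N] (hN : Nat.card N < q) {y : (ZMod q)[N]}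
    (hcenter : y ∈ Subring.center (ZMod q)[N]) (hy : y ^ q = y) (a : N) :
    y.coeff (a ^ q) = y.coeff a := by
  classical
  have := Fintype.ofFinite N
  rw [Nat.card_eq_fintype_card] at hN
  have htrace (n : ℕ) : (regularMatrix (y * single a⁻¹ 1 ^ n)).trace =
      Fintype.card N * y.coeff (a ^ n) := by
    rw [trace_regularMatrix, single_pow, one_pow, coeff_mul_single_apply]
    simp
  have hpow : (y * single a⁻¹ 1) ^ q = y * single a⁻¹ 1 ^ q := by
    have hcomm : Commute y (single a⁻¹ 1) := (Subring.mem_center_iff.1 hcenter _).symm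
    rw [hcomm.mul_pow, hy]
  have hcard : (Fintype.card N : ZMod q) ≠ 0 := by
    rw [Ne, ZMod.natCast_eq_zero_iff]
    exact Nat.not_dvd_of_pos_of_lt Fintype.card_pos hN
  refine mul_left_cancel₀ hcard ?_
  rw [← htrace, ← hpow, map_pow, ZMod.trace_pow_card, ZMod.pow_card]
  simpa using htrace 1

theorem exists_forall_lt_injOn_intCast (s : Finset ℤ) :
    ∃ B : ℕ, ∀ q > B, Set.InjOn (Int.cast : ℤ → ZMod q) s := by
  refine ⟨2 * s.sup Int.natAbs, fun q hq l hl k hk hlk ↦ ?_⟩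
  have hl' := Finset.le_sup (f := Int.natAbs) hl
  have hk' := Finset.le_sup (f := Int.natAbs) hk
  have := Int.eq_zero_of_abs_lt_dvd ((ZMod.intCast_eq_intCast_iff_dvd_sub _ _ _).1 hlk)
    (abs_lt.2 (by omega))
  omega

theorem exists_forall_lt_intCast_coeff_pow_eq {N : Type*} [Group N] [Finite N] {z : ℤ[N]}
    (hcenter : z ∈ Subring.center ℤ[N]) {s : Finset ℤ}
    (hs : aeval z (∏ l ∈ s, (X - C l)) = 0) :
    ∃ B : ℕ, ∀ q > B, q.Prime → ∀ a, (z.coeff (a ^ q) : ZMod q) = z.coeff a := by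
  obtain ⟨B, hB⟩ := exists_forall_lt_injOn_intCast s
  refine ⟨max B (Nat.card N), fun q hq hprime a ↦ ?_⟩
  have : Fact q.Prime := ⟨hprime⟩
  set y := MonoidAlgebra.mapRingHom N (Int.castRingHom (ZMod q)) z
  have hy : aeval y (∏ l ∈ s.image (Int.cast : ℤ → ZMod q), (X - C l)) = 0 := by
    rw [Finset.prod_image (hB q ((le_max_left _ _).trans_lt hq))]
    simpa [mapRingHom_aeval, Polynomial.map_prod] using
      congrArg (MonoidAlgebra.mapRingHom N (Int.castRingHom (ZMod q))) hs
  have hcenter' : y ∈ Subring.center (ZMod q)[N] := by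
    rw [mem_center_monoidAlgebra_iff] at hcenter ⊢
    intro g h
    simp [y, hcenter g h]
  simpa [y] using coeff_pow_char_eq ((le_max_right _ _).trans_lt hq) hcenter'
    (pow_char_eq_self_of_aeval_prod_eq_zero hy) a

end Frobenius

section CutGroup

open MonoidAlgebra HopfAlgebra Polynomial

variable {G : Type*} [Group G]

theorem isOfFinOrder_of_isCutGroup (hG : IsMulTorsion G) (hcut : IsCutGroup G) {x : ℤ[G]}
    (hunit : IsUnit x) (hcenter : x ∈ Subring.center ℤ[G]) : IsOfFinOrder x := by
  obtain ⟨u, rfl⟩ := hunit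
  obtain ⟨g, h⟩ := hcut u hcenter
  have hg : IsOfFinOrder (of ℤ G g) := (of ℤ G).isOfFinOrder (hG g)
  obtain h | h := h <;> rw [h]
  · exact hg
  · rw [neg_eq_neg_one_mul]
    exact (Commute.neg_one_left _).isOfFinOrder_mul (isOfFinOrder_iff_pow_eq_one.2 ⟨2, by simp⟩) hg

theorem aeval_mem_center {R A : Type*} [CommRing R] [Ring A] [Algebra R A] {x : A}
    (hx : x ∈ Subring.center A) (P : R[X]) : aeval x P ∈ Subring.center A :=
  Algebra.adjoin_le (S := Subalgebra.center R A) (Set.singleton_subset_iff.2 hx)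
    (aeval_mem_adjoin_singleton R x)

theorem splits_minpoly_of_isCutGroup (hG : IsMulTorsion G) (hcut : IsCutGroup G) {N : Subgroup G}
    [Finite N] {z : ℤ[N]} (hsymm : antipode ℤ z = z)
    (hcenter : mapDomainRingHom ℤ N.subtype z ∈ Subring.center ℤ[G]) :
    (minpoly ℚ (MonoidAlgebra.mapRingHom N (Int.castRingHom ℚ) z)).Splits := by
  by_contra hsplits
  obtain ⟨P, P', hmul, hpow⟩ := exists_int_polynomial_unit_of_not_splits
    (squarefree_minpoly_of_antipode_eq (by rw [← mapRingHom_antipode, hsymm]))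
    (splits_map_minpoly_of_antipode_eq hsymm) hsplits
  rw [minpoly_dvd_map_iff, map_sub, map_one, sub_eq_zero] at hmul
  have hunit : IsUnit (aeval z P) := isUnit_iff_exists.2
    ⟨aeval z P', by rw [← map_mul, hmul], by rw [← map_mul, mul_comm, hmul]⟩
  have hfin : IsOfFinOrder (mapDomainRingHom ℤ N.subtype (aeval z P)) := by
    refine isOfFinOrder_of_isCutGroup hG hcut (hunit.map _) ?_
    rw [map_aeval_eq_aeval_map (φ := RingHom.id ℤ) (Subsingleton.elim _ _)]
    exact aeval_mem_center hcenter _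
  obtain ⟨r, hr, h⟩ := hfin.exists_pow_eq_one
  refine hpow r hr (minpoly_dvd_map_iff.2 ?_)
  rw [map_sub, map_pow, map_one, sub_eq_zero]
  exact mapDomainRingHom_subtype_injective N (by rw [map_pow, h, map_one])

theorem exists_prime_gt_pow_eq {a b : G} (ha : IsOfFinOrder a)
    (hab : Subgroup.zpowers b = Subgroup.zpowers a) (B : ℕ) : ∃ q > B, q.Prime ∧ a ^ q = b := by
  obtain ⟨j, rfl⟩ := ha.mem_powers_iff_mem_zpowers.2 (hab ▸ Subgroup.mem_zpowers b)
  have hj : j.Coprime (orderOf a) :=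
    mem_zpowers_pow_iff.1 (hab.symm ▸ Subgroup.mem_zpowers a)
  obtain ⟨q, hq, hprime, hqj⟩ := Nat.forall_exists_prime_gt_and_modEq B ha.orderOf_pos.ne' hj
  exact ⟨q, hq, hprime, pow_eq_pow_iff_modEq.2 hqj⟩

theorem IsConjUpToInv.mem_of_mem {N : Subgroup G} [hN : N.Normal] {a b : G}
    (h : IsConjUpToInv a b) (ha : a ∈ N) : b ∈ N := by
  obtain h | h := h
  · obtain ⟨g, rfl⟩ := isConj_iff.1 h
    exact hN.conj_mem a ha g
  · obtain ⟨g, hg⟩ := isConj_iff.1 h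
    exact inv_mem_iff.1 (hg ▸ hN.conj_mem a ha g)

theorem finite_isConjUpToInv {a : G} (ha : {b | IsConj a b}.Finite) :
    {b | IsConjUpToInv a b}.Finite :=
  ha.union (ha.preimage (f := (·⁻¹)) inv_injective.injOn)

theorem exists_mem_center_coeff_eq_indicator {a : G} (ha : {b | IsConj a b}.Finite) :
    ∃ x ∈ Subring.center ℤ[G], antipode ℤ x = x ∧
      ⇑x.coeff = {b | IsConjUpToInv a b}.indicator 1 := by
  classical
  have hfin := finite_isConjUpToInv ha
  have hcoeff {b c : G} (h : IsConjUpToInv b c) :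
      {b | IsConjUpToInv a b}.indicator (1 : G → ℤ) b = {b | IsConjUpToInv a b}.indicator 1 c := by
    exact Set.indicator_eq_indicator ⟨fun hb ↦ IsConjUpToInv.trans hb h,
      fun hc ↦ IsConjUpToInv.trans hc h.symm⟩ rfl
  refine ⟨ofCoeff (.onFinset hfin.toFinset ({b | IsConjUpToInv a b}.indicator 1) ?_), ?_, ?_, rfl⟩
  · intro b hb
    exact hfin.mem_toFinset.2 (Set.mem_of_indicator_ne_zero hb)
  · exact mem_center_monoidAlgebra_iff.2 fun g h ↦
      hcoeff (.inl (isConj_iff.2 ⟨g, rfl⟩ : IsConj h _).symm)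
  · ext b
    rw [coeff_antipode]
    exact hcoeff (IsConjUpToInv.refl b).inv_right.symm

theorem isInverseSemirational_of_isCutGroup (hG : IsMulTorsion G) (hcut : IsCutGroup G) {a : G}
    (ha : {b | IsConj a b}.Finite) : IsInverseSemirational a := by
  intro b hb
  let N := Subgroup.normalClosure {a}
  have : Finite N := finite_normalClosure hG (Set.finite_singleton a) (by simpa using ha)
  have haN : a ∈ N := Subgroup.subset_normalClosure rfl
  obtain ⟨x, hcenter, hsymm, hcoeff⟩ := exists_mem_center_coeff_eq_indicator ha
  have hsub : (x.coeff.support : Set G) ⊆ N := by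
    intro h hh
    rw [Finset.mem_coe, Finsupp.mem_support_iff, hcoeff] at hh
    exact (Set.mem_of_indicator_ne_zero hh).mem_of_mem haN
  obtain ⟨z, rfl⟩ := exists_mapDomainRingHom_subtype_eq hsub
  rw [← mapDomainRingHom_antipode] at hsymm
  have hz := mapDomainRingHom_subtype_injective N hsymm
  obtain ⟨s, hs⟩ := exists_aeval_prod_X_sub_C_eq_zero hz
    (splits_minpoly_of_isCutGroup hG hcut hz hcenter)
  have hcenter' : z ∈ Subring.center ℤ[N] := by
    rw [mem_center_monoidAlgebra_iff] at hcenter ⊢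
    intro g h
    rw [← coeff_mapDomainRingHom_subtype, ← coeff_mapDomainRingHom_subtype]
    exact hcenter g h
  obtain ⟨B, hB⟩ := exists_forall_lt_intCast_coeff_pow_eq hcenter' hs
  obtain ⟨q, hq, hprime, rfl⟩ := exists_prime_gt_pow_eq (hG a) hb B
  have : Fact q.Prime := ⟨hprime⟩
  have hpow := hB q hq hprime ⟨a, haN⟩
  rw [← coeff_mapDomainRingHom_subtype, ← coeff_mapDomainRingHom_subtype, hcoeff] at hpow
  by_contra h
  simp [Set.indicator, mt IsConjUpToInv.symm h, IsConjUpToInv.refl] at hpow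

theorem isCutGroup_iff_forall_isInverseSemirational (hG : IsMulTorsion G) :
    IsCutGroup G ↔ ∀ a ∈ FCTorsion G, IsInverseSemirational a :=
  ⟨fun h _ ha ↦ isInverseSemirational_of_isCutGroup hG h ha.1,
    isCutGroup_of_isInverseSemirational hG⟩

end CutGroup

section PrimePower

open ZMod

variable {p m : ℕ}

theorem natCard_ker_unitsMap (hp : p.Prime) (hm : m ≠ 0) (n : ℕ) :
    Nat.card (unitsMap (pow_dvd_pow p (Nat.le_add_left m n))).ker = p ^ n := by
  have : NeZero p := ⟨hp.ne_zero⟩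
  have hpos : 0 < Nat.totient (p ^ m) := Nat.totient_pos.2 (pow_pos hp.pos m)
  refine Nat.eq_of_mul_eq_mul_right hpos ?_
  calc _ = Nat.card (ZMod (p ^ (n + m)))ˣ := by
        rw [← Subgroup.card_mul_index (unitsMap _).ker, Subgroup.index_ker,
          MonoidHom.range_eq_top.2 (unitsMap_surjective _), Subgroup.card_top,
          Nat.card_eq_fintype_card (α := (ZMod (p ^ m))ˣ), card_units_eq_totient]
    _ = p ^ n * Nat.totient (p ^ m) := by
        rw [Nat.card_eq_fintype_card, card_units_eq_totient, Nat.totient_prime_pow hp (by omega),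
          Nat.totient_prime_pow hp (by omega), ← mul_assoc, ← pow_add]
        congr 2
        omega

theorem zpowers_eq_ker_unitsMap (hp : p.Prime) (hpm : m + 2 ≤ p * m) {n : ℕ}
    {u : (ZMod (p ^ (n + m)))ˣ} (hu : (u : ZMod (p ^ (n + m))) = 1 - p ^ m) :
    Subgroup.zpowers u = (unitsMap (pow_dvd_pow p (Nat.le_add_left m n))).ker := by
  have hm : m ≠ 0 := by rintro rfl; omega
  have : NeZero p := ⟨hp.ne_zero⟩
  have horder : orderOf u = p ^ n := by
    rw [← orderOf_units, hu, sub_eq_add_neg, ← mul_neg_one]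
    exact_mod_cast orderOf_one_add_mul_prime_pow hp m hm hpm (-1)
      (by simpa [Int.natCast_dvd] using hp.one_lt.ne') n
  refine Subgroup.eq_of_le_of_card_ge ?_ ?_
  · rw [Subgroup.zpowers_le, MonoidHom.mem_ker]
    ext
    calc _ = castHom (pow_dvd_pow p (Nat.le_add_left m n)) (ZMod (p ^ m)) u := rfl
      _ = 1 := by
        rw [hu, map_sub, map_pow, map_natCast, map_one, ← Nat.cast_pow, natCast_self, sub_zero]
  · rw [natCard_ker_unitsMap hp hm, Nat.card_zpowers, horder]

theorem exists_pow_eq_or_eq_neg (hp : p.Prime) (hpm : m + 2 ≤ p * m)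
    (hunits : ∀ w : (ZMod (p ^ m))ˣ, w = 1 ∨ w = -1) {n : ℕ} (v : (ZMod (p ^ (n + m)))ˣ) :
    ∃ i : ℕ, (v : ZMod (p ^ (n + m))) = (p ^ m - 1) ^ i ∨
      (v : ZMod (p ^ (n + m))) = -(p ^ m - 1) ^ i := by
  have hm : m ≠ 0 := by rintro rfl; omega
  have : NeZero p := ⟨hp.ne_zero⟩
  have hnil : IsNilpotent (p ^ m : ZMod (p ^ (n + m))) :=
    ⟨n + m, by rw [← pow_mul, mul_comm, pow_mul]; simp [← Nat.cast_pow, hm]⟩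
  obtain ⟨u, hu⟩ := hnil.isUnit_one_sub
  have hker {w : (ZMod (p ^ (n + m)))ˣ}
      (hw : unitsMap (pow_dvd_pow p (Nat.le_add_left m n)) w = 1) :
      ∃ i : ℕ, (w : ZMod (p ^ (n + m))) = (p ^ m - 1) ^ i ∨
        (w : ZMod (p ^ (n + m))) = -(p ^ m - 1) ^ i := by
    rw [← MonoidHom.mem_ker, ← zpowers_eq_ker_unitsMap hp hpm hu,
      ← mem_powers_iff_mem_zpowers] at hw
    obtain ⟨i, rfl⟩ := hw
    refine ⟨i, i.even_or_odd.imp (fun hi ↦ ?_) fun hi ↦ ?_⟩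
    · rw [Units.val_pow_eq_pow_val, hu, ← hi.neg_pow, neg_sub]
    · rw [Units.val_pow_eq_pow_val, hu, ← hi.neg_pow, neg_sub]
  obtain h | h := hunits (unitsMap (pow_dvd_pow p (Nat.le_add_left m n)) v)
  · exact hker h
  · obtain ⟨i, hi⟩ := hker (w := -v) <| by
      ext
      simpa [unitsMap_def, neg_eq_iff_eq_neg] using congrArg Units.val h
    exact ⟨i, hi.symm.imp (by simp) (by simp [neg_eq_iff_eq_neg])⟩

end PrimePower

section PGroup

variable {p : ℕ} {G : Type*} [Group G]

-- Iterating the conjugation `p ^ r` times, with `g ^ p ^ r = 1`, gives `i ^ p ^ r = k ^ p ^ r` in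
-- `ZMod p`, where raising to the power `p` is the identity.
theorem intCast_eq_of_isConj_zpow [Fact p.Prime] (hG : IsPGroup p G) {a : G} (ha : a ≠ 1)
    {i k : ℤ} (h : IsConj (a ^ i) (a ^ k)) : (i : ZMod p) = k := by
  obtain ⟨g, hg⟩ := isConj_iff.1 h
  have hpow (s : ℕ) : g ^ s * a ^ (i ^ s) * (g ^ s)⁻¹ = a ^ (k ^ s) := by
    induction s with
    | zero => simp
    | succ s ih =>
      calc g ^ (s + 1) * a ^ (i ^ (s + 1)) * (g ^ (s + 1))⁻¹
          = g * (g ^ s * a ^ (i ^ s) * (g ^ s)⁻¹) ^ i * g⁻¹ := by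
            rw [conj_zpow, ← zpow_mul, ← pow_succ i, pow_succ' g]; group
        _ = (g * a ^ i * g⁻¹) ^ (k ^ s) := by rw [ih, ← zpow_mul, mul_comm, zpow_mul, conj_zpow]
        _ = a ^ (k ^ (s + 1)) := by rw [hg, ← zpow_mul, ← pow_succ']
  obtain ⟨r, hr⟩ := isPGroup_iff_pow_pow_eq_one.1 hG g
  have heq : a ^ (i ^ p ^ r) = a ^ (k ^ p ^ r) := by simpa [hr] using hpow (p ^ r)
  have hdvd : (p : ℤ) ∣ i ^ p ^ r - k ^ p ^ r :=
    (Int.natCast_dvd_natCast.2 (hG.dvd_orderOf ha)).trans <| by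
      rw [orderOf_dvd_iff_zpow_eq_one, zpow_sub, heq, mul_inv_cancel]
  simpa [ZMod.pow_card_pow, sub_eq_zero] using (ZMod.intCast_zmod_eq_zero_iff_dvd _ p).2 hdvd

theorem isInverseSemirational_one : IsInverseSemirational (1 : G) := by
  intro b hb
  rw [Subgroup.zpowers_one_eq_bot, Subgroup.zpowers_eq_bot] at hb
  obtain rfl : b = 1 := hb
  exact .refl _

theorem IsInverseSemirational.isConjUpToInv_pow {a : G} (h : IsInverseSemirational a) {k : ℕ}
    (hk : k.Coprime (orderOf a)) : IsConjUpToInv (a ^ k) a :=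
  h _ (le_antisymm (by simp [Subgroup.zpowers_le]) (by simpa using mem_zpowers_pow_iff.2 hk))

theorem isConjUpToInv_pow_pow {c : ℕ} (h : ∀ a ∈ FCTorsion G, IsConjUpToInv (a ^ c) a)
    {a : G} (ha : a ∈ FCTorsion G) (i : ℕ) : IsConjUpToInv (a ^ c ^ i) a := by
  induction i with
  | zero => simpa using IsConjUpToInv.refl a
  | succ i ih =>
    rw [pow_succ, pow_mul]
    exact (h _ (pow_mem_FCTorsion ha _)).trans ih

theorem exists_pow_eq_pow_or_eq_inv {m : ℕ} (hp : p.Prime) (hpm : m + 2 ≤ p * m)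
    (hunits : ∀ w : (ZMod (p ^ m))ˣ, w = 1 ∨ w = -1) {a : G} {n j : ℕ} (ha : a ^ p ^ n = 1)
    (hj : j.Coprime p) :
    ∃ i : ℕ, a ^ j = a ^ (p ^ m - 1) ^ i ∨ a ^ j = (a ^ (p ^ m - 1) ^ i)⁻¹ := by
  have hcast : ((p ^ m - 1 : ℕ) : ZMod (p ^ (n + m))) = p ^ m - 1 := by
    rw [Nat.cast_sub (Nat.one_le_pow _ _ hp.pos), Nat.cast_pow, Nat.cast_one]
  have hdvd : p ^ n ∣ p ^ (n + m) := pow_dvd_pow p (Nat.le_add_right n m)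
  obtain ⟨i, h⟩ := exists_pow_eq_or_eq_neg hp hpm hunits
    (ZMod.unitOfCoprime j (hj.pow_right (n + m)))
  rw [ZMod.coe_unitOfCoprime, ← hcast, ← Nat.cast_pow] at h
  refine ⟨i, h.imp (fun h ↦ ?_) fun h ↦ ?_⟩
  · rw [ZMod.natCast_eq_natCast_iff] at h
    exact pow_eq_pow_iff_modEq.2 (h.of_dvd ((orderOf_dvd_of_pow_eq_one ha).trans hdvd))
  · rw [eq_neg_iff_add_eq_zero, ← Nat.cast_add, ZMod.natCast_eq_zero_iff] at h
    rw [eq_inv_iff_mul_eq_one, ← pow_add, ← orderOf_dvd_iff_pow_eq_one]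
    exact (orderOf_dvd_of_pow_eq_one ha).trans (hdvd.trans h)

theorem forall_isInverseSemirational_iff {m : ℕ} (hp : p.Prime) (hpm : m + 2 ≤ p * m)
    (hunits : ∀ w : (ZMod (p ^ m))ˣ, w = 1 ∨ w = -1) (hG : IsPGroup p G) :
    (∀ a ∈ FCTorsion G, IsInverseSemirational a) ↔
      ∀ a ∈ FCTorsion G, IsConjUpToInv (a ^ (p ^ m - 1)) a := by
  have hm : m ≠ 0 := by rintro rfl; omega
  have : Fact p.Prime := ⟨hp⟩
  refine ⟨fun h a ha ↦ (h a ha).isConjUpToInv_pow ?_, fun h a ha b hb ↦ ?_⟩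
  · refine (hG.orderOf_coprime (hp.coprime_iff_not_dvd.2 fun h ↦ hp.not_dvd_one ?_) a).symm
    exact (Nat.dvd_sub_iff_right (Nat.one_le_pow m p hp.pos) (dvd_pow_self p hm)).1 h
  obtain rfl | ha1 := eq_or_ne a 1
  · exact isInverseSemirational_one b hb
  obtain ⟨j, rfl⟩ := ha.2.mem_powers_iff_mem_zpowers.2 (hb ▸ Subgroup.mem_zpowers b)
  obtain ⟨n, hn⟩ := isPGroup_iff_pow_pow_eq_one.1 hG a
  have hj : j.Coprime (orderOf a) :=
    mem_zpowers_pow_iff.1 (hb.symm ▸ Subgroup.mem_zpowers a)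
  obtain ⟨i, hi | hi⟩ := exists_pow_eq_pow_or_eq_inv hp hpm hunits hn
    (Nat.Coprime.coprime_dvd_right (hG.dvd_orderOf ha1) hj) <;> simp only [hi]
  · exact isConjUpToInv_pow_pow h ha i
  · exact (isConjUpToInv_pow_pow h ha i).symm.inv_right.symm

theorem eq_three_and_isConj_sq_inv [Fact p.Prime] (hG : IsPGroup p G) {a : G} (ha : a ≠ 1)
    (h : IsConjUpToInv (a ^ 2) a) : p = 3 ∧ IsConj (a ^ 2) a⁻¹ := by
  obtain h | h := h
  · have := intCast_eq_of_isConj_zpow hG ha (i := 2) (k := 1) (by simpa using h)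
    have : (1 : ZMod p) = 0 := by linear_combination this
    exact absurd this one_ne_zero
  · have := intCast_eq_of_isConj_zpow hG ha (i := 2) (k := -1) (by simpa using h)
    have : ((3 : ℕ) : ZMod p) = 0 := by linear_combination this
    rw [ZMod.natCast_eq_zero_iff] at this
    exact ⟨(Nat.prime_dvd_prime_iff_eq Fact.out Nat.prime_three).1 this, h⟩

theorem eq_three_and_forall_isConj_sq_inv (hp : p.Prime) (hp2 : p ≠ 2) (hG : IsPGroup p G)
    (h : ∀ a ∈ FCTorsion G, IsInverseSemirational a) (hne : FCTorsion G ≠ {1}) :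
    p = 3 ∧ ∀ a ∈ FCTorsion G, IsConj (a ^ 2) a⁻¹ := by
  have : Fact p.Prime := ⟨hp⟩
  have hcoprime : p.Coprime 2 := (Nat.coprime_primes hp Nat.prime_two).2 hp2
  have hsq {a : G} (ha : a ∈ FCTorsion G) (ha1 : a ≠ 1) : p = 3 ∧ IsConj (a ^ 2) a⁻¹ :=
    eq_three_and_isConj_sq_inv hG ha1
      ((h a ha).isConjUpToInv_pow (hG.orderOf_coprime hcoprime a).symm)
  have hone : 1 ∈ FCTorsion G := coe_mem_FCTorsion (⊥ : Subgroup G) 1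
  obtain ⟨a, ha, ha1⟩ : ∃ a ∈ FCTorsion G, a ≠ 1 := by
    by_contra! h1
    exact hne (Set.eq_singleton_iff_unique_mem.2 ⟨hone, h1⟩)
  refine ⟨(hsq ha ha1).1, fun b hb ↦ ?_⟩
  obtain rfl | hb1 := eq_or_ne b 1
  · simp
  · exact (hsq hb hb1).2

theorem isMulTorsion_of_isPGroup (hp : p.Prime) (hG : IsPGroup p G) : IsMulTorsion G := by
  intro g
  obtain ⟨k, hk⟩ := isPGroup_iff_pow_pow_eq_one.1 hG g
  exact isOfFinOrder_iff_pow_eq_one.2 ⟨p ^ k, pow_pos hp.pos k, hk⟩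

end PGroup

/-- A (possibly infinite) `p`-group `G` is a cut-group if and only if either
`p = 2` and `a³ ∼ a^{±1}` for all `a ∈ Φ⁺(G)`, or `p = 3` and `a² ∼ a⁻¹` for all
`a ∈ Φ⁺(G)`, or `Φ⁺(G) = {1}`. -/
theorem isCutGroup_pGroup_iff {p : ℕ} (hp : p.Prime) {G : Type*} [Group G]
    (hG : IsPGroup p G) :
    IsCutGroup G ↔
      (p = 2 ∧ ∀ a ∈ FCTorsion G, IsConj (a ^ 3) a ∨ IsConj (a ^ 3) a⁻¹) ∨
      (p = 3 ∧ ∀ a ∈ FCTorsion G, IsConj (a ^ 2) a⁻¹) ∨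
      FCTorsion G = {1} := by
  rw [isCutGroup_iff_forall_isInverseSemirational (isMulTorsion_of_isPGroup hp hG)]
  constructor
  · intro h
    by_cases hp2 : p = 2
    · subst hp2
      exact .inl ⟨rfl,
        (forall_isInverseSemirational_iff (m := 2) hp le_rfl (by decide) hG).1 h⟩
    · by_cases h1 : FCTorsion G = {1}
      · exact .inr (.inr h1)
      · exact .inr (.inl (eq_three_and_forall_isConj_sq_inv hp hp2 hG h h1))
  · rintro (⟨rfl, h⟩ | ⟨rfl, h⟩ | h)
    · exact (forall_isInverseSemirational_iff (m := 2) hp le_rfl (by decide) hG).2 h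
    · exact (forall_isInverseSemirational_iff (m := 1) hp le_rfl (by decide) hG).2
        fun a ha ↦ .inr (h a ha)
    · simpa only [h, Set.mem_singleton_iff, forall_eq] using isInverseSemirational_one
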